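/- arXiv:cs/0210027 — 2 statements merged into one kernel-verified Lean document; each statement's English description precedes it below -/
import Mathlib

section
/- Let P be a definite (negation-free) propositional normal logic program. Then there is a unique two-valued model M of P for which there exists a total level mapping l : B_P → α such that for every atom A ∈ M there is a clause A ← A₁,…,Aₙ in P with Aᵢ ∈ M and l(A) > l(Aᵢ) for all i = 1,…,n. Moreover, this unique M equals the least two-valued model T_P⁺↑ω of P. -/
namespace LP

/-- A literal over a set of propositional atoms: an atom or a negated atom. -/
inductive Lit (atom : Type) where
  | pos : atom → Lit atom
  | neg : atom → Lit atom

/-- The underlying atom of a literal. -/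
def Lit.atomOf {atom : Type} : Lit atom → atom
  | .pos a => a
  | .neg a => a

/-- A clause `head ← pos₁,…,posₙ, ¬neg₁,…,¬negₘ`. -/
structure Clause (atom : Type) where
  head : atom
  pos : Finset atom
  neg : Finset atom

variable {atom : Type}

/-- A (propositional) normal logic program: a set of clauses. -/
abbrev Program (atom : Type) := Set (Clause atom)

/-- Partial interpretations: sets of literals. -/
abbrev Interp (atom : Type) := Set (Lit atom)

def Consistent (I : Interp atom) : Prop := ∀ a : atom, ¬ (Lit.pos a ∈ I ∧ Lit.neg a ∈ I)

def Total (I : Interp atom) : Prop := ∀ a : atom, Lit.pos a ∈ I ∨ Lit.neg a ∈ I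

/-- An atom is defined (true or false, i.e. not undefined) in `I`. -/
def Defined (I : Interp atom) (A : atom) : Prop := Lit.pos A ∈ I ∨ Lit.neg A ∈ I

/-- Every body literal of the clause is true in `I`. -/
def BodyTrue (I : Interp atom) (C : Clause atom) : Prop :=
  (∀ a ∈ C.pos, Lit.pos a ∈ I) ∧ (∀ b ∈ C.neg, Lit.neg b ∈ I)

/-- Some body literal of the clause is false in `I`. -/
def BodyFalse (I : Interp atom) (C : Clause atom) : Prop :=
  (∃ a ∈ C.pos, Lit.neg a ∈ I) ∨ (∃ b ∈ C.neg, Lit.pos b ∈ I)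

/-- Three-valued model. -/
def Model3 (P : Program atom) (I : Interp atom) : Prop :=
  Consistent I ∧ ∀ C ∈ P,
    (BodyTrue I C → Lit.pos C.head ∈ I) ∧ (¬ BodyFalse I C → Lit.neg C.head ∉ I)

/-- Two-valued model. -/
def Model2 (P : Program atom) (M : Set atom) : Prop :=
  ∀ C ∈ P, (∀ a ∈ C.pos, a ∈ M) → (∀ b ∈ C.neg, b ∉ M) → C.head ∈ M

/-- A program is definite if no clause has negative body literals. -/
def Definite (P : Program atom) : Prop := ∀ C ∈ P, C.neg = ∅

/-- The one-step operator `T_P⁺` for definite programs. -/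
def Tplus (P : Program atom) (M : Set atom) : Set atom :=
  {A | ∃ C ∈ P, C.head = A ∧ C.neg = ∅ ∧ ∀ a ∈ C.pos, a ∈ M}

def TplusIter (P : Program atom) : ℕ → Set atom
  | 0 => ∅
  | n + 1 => Tplus P (TplusIter P n)

/-- `T_P⁺ ↑ ω`, the least two-valued model of a definite program. -/
def TplusOmega (P : Program atom) : Set atom := ⋃ n, TplusIter P n

/-- The Gelfond–Lifschitz reduct `P/M`. -/
def GLreduct (P : Program atom) (M : Set atom) : Program atom :=
  {C' | ∃ C ∈ P, (∀ b ∈ C.neg, b ∉ M) ∧ C' = ⟨C.head, C.pos, ∅⟩}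

/-- The Gelfond–Lifschitz operator. -/
def GLop (P : Program atom) (M : Set atom) : Set atom := TplusOmega (GLreduct P M)

/-- Stable model. -/
def Stable (P : Program atom) (M : Set atom) : Prop := GLop P M = M

def posLits (S : Set atom) : Interp atom := Lit.pos '' S
def negLits (S : Set atom) : Interp atom := Lit.neg '' S

/-- Three-valued immediate-consequence operator `T_P`. -/
def TP (P : Program atom) (I : Interp atom) : Set atom :=
  {A | ∃ C ∈ P, C.head = A ∧ BodyTrue I C}

/-- `F_P`: atoms all of whose clauses have false bodies. -/
def FP (P : Program atom) (I : Interp atom) : Set atom :=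
  {A | ∀ C ∈ P, C.head = A → BodyFalse I C}

/-- Fitting's operator `Φ_P`. -/
def Phi (P : Program atom) (I : Interp atom) : Interp atom :=
  posLits (TP P I) ∪ negLits (FP P I)

/-- Knaster–Tarski least (pre-)fixed point of an operator on sets. -/
def lfpSet {L : Type*} (F : Set L → Set L) : Set L := ⋂₀ {I | F I ⊆ I}

/-- Knaster–Tarski greatest (post-)fixed point of an operator on sets. -/
def gfpSet {L : Type*} (F : Set L → Set L) : Set L := ⋃₀ {I | I ⊆ F I}

/-- The Fitting (Kripke–Kleene) model: least fixed point of `Φ_P`. -/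
def FittingModel (P : Program atom) : Interp atom := lfpSet (Phi P)

/-- Transfinite iteration `F ↑ α` of an operator starting from `∅`. -/
noncomputable def iterOrd {L : Type*} (F : Set L → Set L) (α : Ordinal.{0}) : Set L :=
  Ordinal.limitRecOn α ∅ (fun _ ih => F ih) (fun o _ ih => ⋃ β, ⋃ h : β < o, ih β h)

/-- `U` is an unfounded set of `P` with respect to `I`. -/
def Unfounded (P : Program atom) (I : Interp atom) (U : Set atom) : Prop :=
  ∀ A ∈ U, ∀ C ∈ P, C.head = A → BodyFalse I C ∨ ∃ a ∈ C.pos, a ∈ U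

/-- The greatest unfounded set of `P` with respect to `I`. -/
def UP (P : Program atom) (I : Interp atom) : Set atom := ⋃₀ {U | Unfounded P I U}

/-- The van Gelder–Ross–Schlipf operator `W_P`. -/
def WP (P : Program atom) (I : Interp atom) : Interp atom :=
  posLits (TP P I) ∪ negLits (UP P I)

/-- The well-founded model: least fixed point of `W_P`. -/
def WFModel (P : Program atom) : Interp atom := lfpSet (WP P)

/-- `P` satisfies (F) with respect to `I` and the level mapping `l`. -/
def CondF (P : Program atom) (I : Interp atom) (l : atom → Ordinal.{0}) : Prop :=
  ∀ A : atom, Defined I A →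
    (Lit.pos A ∈ I ∧ ∃ C ∈ P, C.head = A ∧
        (∀ a ∈ C.pos, Lit.pos a ∈ I ∧ l a < l A) ∧
        (∀ b ∈ C.neg, Lit.neg b ∈ I ∧ l b < l A)) ∨
    (Lit.neg A ∈ I ∧ ∀ C ∈ P, C.head = A →
        (∃ a ∈ C.pos, Lit.neg a ∈ I ∧ l a < l A) ∨
        (∃ b ∈ C.neg, Lit.pos b ∈ I ∧ l b < l A))

/-- `P` satisfies (WF) with respect to `I` and the level mapping `l`. -/
def CondWF (P : Program atom) (I : Interp atom) (l : atom → Ordinal.{0}) : Prop :=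
  ∀ A : atom, Defined I A →
    (Lit.pos A ∈ I ∧ ∃ C ∈ P, C.head = A ∧
        (∀ a ∈ C.pos, Lit.pos a ∈ I ∧ l a < l A) ∧
        (∀ b ∈ C.neg, Lit.neg b ∈ I ∧ l b < l A)) ∨
    (Lit.neg A ∈ I ∧ ∀ C ∈ P, C.head = A →
        (∃ a ∈ C.pos, Lit.neg a ∈ I ∧ l a ≤ l A) ∨
        (∃ b ∈ C.neg, Lit.pos b ∈ I ∧ l b < l A))

/-- `P` satisfies (WS) with respect to `I` and the level mapping `l`. -/
def CondWS (P : Program atom) (I : Interp atom) (l : atom → Ordinal.{0}) : Prop :=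
  ∀ A : atom, Defined I A →
    (Lit.pos A ∈ I ∧ ∃ C ∈ P, C.head = A ∧
        (∀ a ∈ C.pos, Lit.pos a ∈ I ∧ l a < l A) ∧
        (∀ b ∈ C.neg, Lit.neg b ∈ I ∧ l b < l A)) ∨
    (Lit.neg A ∈ I ∧ ∀ C ∈ P, C.head = A →
        (∃ a ∈ C.pos, Lit.neg a ∈ I ∧ l a < l A) ∨
        ((∀ a ∈ C.pos, l a ≤ l A) ∧ (∀ b ∈ C.neg, l b < l A) ∧
            ∃ a ∈ C.pos, Lit.neg a ∈ I) ∨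
        (∃ b ∈ C.neg, Lit.pos b ∈ I ∧ l b < l A))

/-- `A` refers to `B`. -/
def RefersTo (P : Program atom) (A B : atom) : Prop :=
  ∃ C ∈ P, C.head = A ∧ (B ∈ C.pos ∨ B ∈ C.neg)

/-- `A` refers negatively to `B`. -/
def RefersNeg (P : Program atom) (A B : atom) : Prop :=
  ∃ C ∈ P, C.head = A ∧ B ∈ C.neg

/-- `DepOn P A B`: `A` depends on `B`, i.e. `B ≤ A`. -/
def DepOn (P : Program atom) : atom → atom → Prop := Relation.TransGen (RefersTo P)

/-- `DepNeg P B A`: `B < A`, i.e. `A` depends negatively on `B`. -/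
def DepNeg (P : Program atom) (B A : atom) : Prop :=
  ∃ C D, RefersNeg P C D ∧ (DepOn P A C ∨ C = A) ∧ (DepOn P D B ∨ B = D)

/-- `A ~ B`. -/
def Sim (P : Program atom) (A B : atom) : Prop :=
  A = B ∨ (DepNeg P A B ∧ DepNeg P B A)

/-- The components of `P`: equivalence classes of `~`. -/
def IsComponent (P : Program atom) (C : Set atom) : Prop :=
  ∃ A : atom, C = {B | Sim P A B}

/-- A trivial component: a singleton `{A}` with `A ≮ A`. -/
def TrivialComponent (P : Program atom) (C : Set atom) : Prop :=
  ∃ A : atom, C = {A} ∧ ¬ DepNeg P A A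

/-- The ordering `≺` on components. -/
def CompLt (P : Program atom) (C₁ C₂ : Set atom) : Prop :=
  C₁ ≠ C₂ ∧ ∀ A₁ ∈ C₁, ∃ A₂ ∈ C₂, DepNeg P A₁ A₂

def MinimalComponent (P : Program atom) (C : Set atom) : Prop :=
  IsComponent P C ∧ ¬ ∃ C₂, IsComponent P C₂ ∧ CompLt P C₂ C

/-- The bottom stratum `S(P)`: union of all minimal components. -/
def bottomStratum (P : Program atom) : Set atom :=
  {A | ∃ C, MinimalComponent P C ∧ A ∈ C}

/-- The bottom layer `L(P)`: clauses with head in the bottom stratum. -/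
def bottomLayer (P : Program atom) : Program atom :=
  {C ∈ P | C.head ∈ bottomStratum P}

/-- Delete from the body of `C` all literals true in `I`. -/
noncomputable def reduceClause (I : Interp atom) (C : Clause atom) : Clause atom :=
  letI : ∀ p : Prop, Decidable p := fun p => Classical.propDecidable p
  ⟨C.head, C.pos.filter (fun a => Lit.pos a ∉ I), C.neg.filter (fun b => Lit.neg b ∉ I)⟩

/-- Steps (1) and (2) of the reduct of `P` with respect to `I`. -/
noncomputable def step12 (P : Program atom) (I : Interp atom) : Program atom :=
  {C' | ∃ C ∈ P, Lit.pos C.head ∉ I ∧ ¬ BodyFalse I C ∧ C' = reduceClause I C}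

def IsUnitClause (C : Clause atom) : Prop := C.pos = ∅ ∧ C.neg = ∅

/-- The reduct `P/I` of Przymusinska–Przymusinski (steps (1)–(3)). -/
noncomputable def reduct (P : Program atom) (I : Interp atom) : Program atom :=
  {C ∈ step12 P I | IsUnitClause C ∨ ¬ ∃ C' ∈ step12 P I, C'.head = C.head ∧ IsUnitClause C'}

/-- The atoms occurring in `P`. -/
def atomsOf (P : Program atom) : Set atom :=
  {A | ∃ C ∈ P, A = C.head ∨ A ∈ C.pos ∨ A ∈ C.neg}

/-- `R`: atoms undefined in `N` which are eliminated from `P` by reducing w.r.t. `N`. -/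
noncomputable def Ratoms (P : Program atom) (N : Interp atom) : Set atom :=
  {A | A ∈ atomsOf P ∧ A ∉ atomsOf (reduct P N) ∧ ¬ Defined N A}

/-- The definite (partial) model of a definite program `Q`. -/
def defPartialModel (Q : Program atom) : Interp atom :=
  posLits (TplusOmega Q) ∪ negLits (atomsOf Q \ TplusOmega Q)

/-- The stopping condition of the weakly perfect model construction at `N`. -/
noncomputable def stopCond (P : Program atom) (N : Interp atom) : Prop :=
  reduct P N = ∅ ∨ bottomStratum (reduct P N) = ∅ ∨
    ∃ C ∈ bottomLayer (reduct P N), C.neg ≠ ∅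

/-- `M_α` computed from `N_α` (empty if the construction has stopped). -/
noncomputable def Mstep (P : Program atom) (N : Interp atom) : Interp atom :=
  letI : ∀ p : Prop, Decidable p := fun p => Classical.propDecidable p
  if stopCond P N then ∅
  else defPartialModel (bottomLayer (reduct P N)) ∪ negLits (Ratoms P N)

/-- `N_α = ⋃_{0<δ<α} M_δ` of the weakly perfect model construction. -/
noncomputable def Nseq (P : Program atom) : Ordinal.{0} → Interp atom :=
  Ordinal.lt_wf.fix (C := fun _ => Interp atom)
    (fun α ih => ⋃ β : Ordinal.{0}, ⋃ h : β < α, Mstep P (ih β h))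

/-- The stage at which the weakly perfect model construction stops. -/
noncomputable def wpStop (P : Program atom) : Ordinal.{0} :=
  sInf {α | stopCond P (Nseq P α)}

/-- The weakly perfect model `M_P = N_α ∪ ¬R_α` at the stopping stage `α`. -/
noncomputable def weaklyPerfectModel (P : Program atom) : Interp atom :=
  Nseq P (wpStop P) ∪ negLits (Ratoms P (Nseq P (wpStop P)))

/-- Clause subsumption `C₁ ≼ C₂`. -/
def ClauseSub (C₁ C₂ : Clause atom) : Prop :=
  C₁.head = C₂.head ∧ C₁.pos ⊆ C₂.pos ∧ C₁.neg ⊆ C₂.neg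

/-- `P'` subsumes `Q` model-consistently with respect to `I`: `P' ≼_I Q`. -/
def SubsumesMC (P' Q : Program atom) (I : Interp atom) : Prop :=
  (∀ C₁ ∈ P', ∃ C₂ ∈ Q, ClauseSub C₁ C₂ ∧
      (∀ a ∈ C₂.pos, a ∉ C₁.pos → Lit.pos a ∈ I) ∧
      (∀ b ∈ C₂.neg, b ∉ C₁.neg → Lit.neg b ∈ I)) ∧
  (∀ C₂ ∈ Q, BodyTrue I C₂ → Lit.pos C₂.head ∉ I → ∃ C₁ ∈ P', ClauseSub C₁ C₂)


/-!
The least model is exhausted by the finite stages of `T_P⁺`, because clause bodies are finite. An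
atom that enters at stage `n + 1` does so through a clause whose body atoms entered by stage `n`,
so the stage of entry is a level mapping with the required descent. Conversely, well-founded
induction along any such level mapping derives every atom of `M` inside an arbitrary model.
Hence `M` is contained in the least model, and so equals it.
-/

variable {P : Program atom} {M N : Set atom} {α β : Type*}

/-- `M` is well-supported by the level mapping `l`: each atom of `M` is the head of a clause whose
positive body atoms lie in `M` at strictly smaller levels. Negative body literals are ignored, so
the notion is meant for definite programs. -/
def WellSupported [LT α] (P : Program atom) (M : Set atom) (l : atom → α) : Prop :=
  ∀ A ∈ M, ∃ C ∈ P, C.head = A ∧ ∀ a ∈ C.pos, a ∈ M ∧ l a < l A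

/-- The first stage `n` with `A ∈ T_P⁺ ↑ n`, used as the level of `A`. Atoms outside `T_P⁺ ↑ ω`
get the junk value `0`, which is never the stage of a derivable atom. -/
noncomputable def entryStage (P : Program atom) (A : atom) : ℕ :=
  sInf {n | A ∈ TplusIter P n}

theorem Tplus_mono (P : Program atom) : Monotone (Tplus P) := by
  rintro M N hMN A ⟨C, hC, hhead, hneg, hpos⟩
  exact ⟨C, hC, hhead, hneg, fun a ha => hMN (hpos a ha)⟩

theorem TplusIter_eq_iterate (P : Program atom) (n : ℕ) :
    TplusIter P n = (Tplus P)^[n] ∅ := by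
  induction n with
  | zero => rfl
  | succ n ih => rw [Function.iterate_succ_apply', ← ih, TplusIter]

theorem TplusIter_mono (P : Program atom) : Monotone (TplusIter P) := by
  simpa only [← TplusIter_eq_iterate] using
    (Tplus_mono P).monotone_iterate_of_le_map (Set.empty_subset (Tplus P ∅))

theorem Model2.Tplus_subset (hM : Model2 P M) : Tplus P M ⊆ M := by
  rintro _ ⟨C, hC, rfl, hneg, hpos⟩
  exact hM C hC hpos (by simp [hneg])

theorem Definite.model2_iff_Tplus_subset (hP : Definite P) : Model2 P M ↔ Tplus P M ⊆ M :=
  ⟨Model2.Tplus_subset, fun hM C hC hpos _ => hM ⟨C, hC, rfl, hP C hC, hpos⟩⟩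

theorem Tplus_TplusOmega_subset (P : Program atom) :
    Tplus P (TplusOmega P) ⊆ TplusOmega P := by
  rintro A ⟨C, hC, hhead, hneg, hpos⟩
  obtain ⟨n, hn⟩ : ∃ n, (C.pos : Set atom) ⊆ TplusIter P n :=
    (TplusIter_mono P).directed_le.exists_mem_subset_of_finset_subset_biUnion hpos
  exact Set.mem_iUnion_of_mem (n + 1) ⟨C, hC, hhead, hneg, hn⟩

theorem TplusOmega_subset_of_Tplus_subset (hM : Tplus P M ⊆ M) : TplusOmega P ⊆ M := by
  refine Set.iUnion_subset fun n => ?_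
  induction n with
  | zero => exact Set.empty_subset M
  | succ n ih => exact (Tplus_mono P ih).trans hM

theorem Definite.isLeast_TplusOmega (hP : Definite P) :
    IsLeast {M | Model2 P M} (TplusOmega P) :=
  ⟨hP.model2_iff_Tplus_subset.2 (Tplus_TplusOmega_subset P),
    fun _ hM => TplusOmega_subset_of_Tplus_subset hM.Tplus_subset⟩

theorem entryStage_le {n : ℕ} {A : atom} (hA : A ∈ TplusIter P n) : entryStage P A ≤ n :=
  Nat.sInf_le hA

theorem mem_TplusIter_entryStage {A : atom} (hA : A ∈ TplusOmega P) :
    A ∈ TplusIter P (entryStage P A) :=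
  Nat.sInf_mem (Set.mem_iUnion.1 hA)

theorem wellSupported_entryStage (P : Program atom) :
    WellSupported P (TplusOmega P) (entryStage P) := by
  intro A hA
  have hstage := mem_TplusIter_entryStage hA
  cases hn : entryStage P A with
  | zero =>
    rw [hn] at hstage
    exact absurd hstage (Set.notMem_empty A)
  | succ n =>
    rw [hn] at hstage
    obtain ⟨C, hC, hhead, -, hpos⟩ := hstage
    exact ⟨C, hC, hhead, fun a ha =>
      ⟨Set.mem_iUnion_of_mem n (hpos a ha), Nat.lt_succ_of_le (entryStage_le (hpos a ha))⟩⟩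

theorem WellSupported.strictMono_comp [Preorder α] [Preorder β] {l : atom → α} {f : α → β}
    (hl : WellSupported P M l) (hf : StrictMono f) : WellSupported P M (f ∘ l) := by
  intro A hA
  obtain ⟨C, hC, hhead, hpos⟩ := hl A hA
  exact ⟨C, hC, hhead, fun a ha => ⟨(hpos a ha).1, hf (hpos a ha).2⟩⟩

theorem WellSupported.subset_of_model2 [LT α] [WellFoundedLT α] {l : atom → α}
    (hM : WellSupported P M l) (hP : Definite P) (hN : Model2 P N) : M ⊆ N := by
  intro A hA
  induction A using (InvImage.wf l wellFounded_lt).induction with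
  | _ A ih =>
    obtain ⟨C, hC, rfl, hpos⟩ := hM A hA
    have hbody : ∀ a ∈ C.pos, a ∈ N := fun a ha => ih a (hpos a ha).2 (hpos a ha).1
    exact hN C hC hbody (by simp [hP C hC])

theorem WellSupported.eq_TplusOmega [LT α] [WellFoundedLT α] {l : atom → α}
    (hl : WellSupported P M l) (hP : Definite P) (hM : Model2 P M) : M = TplusOmega P :=
  (hl.subset_of_model2 hP hP.isLeast_TplusOmega.1).antisymm (hP.isLeast_TplusOmega.2 hM)

theorem definite_least_model_char_general [Preorder α] [WellFoundedLT α]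
    (hP : Definite P) {f : ℕ → α} (hf : StrictMono f) :
    (∃! M : Set atom, Model2 P M ∧ ∃ l : atom → α, WellSupported P M l) ∧
    ∀ M : Set atom, (Model2 P M ∧ ∃ l : atom → α, WellSupported P M l) →
      M = TplusOmega P := by
  have unique : ∀ M : Set atom, (Model2 P M ∧ ∃ l : atom → α, WellSupported P M l) →
      M = TplusOmega P := fun _ ⟨hM, _, hl⟩ => hl.eq_TplusOmega hP hM
  have supported : WellSupported P (TplusOmega P) (f ∘ entryStage P) :=
    (wellSupported_entryStage P).strictMono_comp hf
  exact ⟨⟨TplusOmega P, ⟨hP.isLeast_TplusOmega.1, _, supported⟩, unique⟩, unique⟩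

/-- for a definite program there is a unique two-valued model supported
by a total level mapping, and it is the least two-valued model `T_P⁺↑ω`. -/
theorem definite_least_model_char {atom : Type} [Countable atom]
    (P : Program atom) (hP : Definite P) :
    (∃! M : Set atom, Model2 P M ∧ ∃ l : atom → Ordinal.{0},
        ∀ A ∈ M, ∃ C ∈ P, C.head = A ∧ ∀ a ∈ C.pos, a ∈ M ∧ l a < l A) ∧
    ∀ M : Set atom,
      (Model2 P M ∧ ∃ l : atom → Ordinal.{0},
        ∀ A ∈ M, ∃ C ∈ P, C.head = A ∧ ∀ a ∈ C.pos, a ∈ M ∧ l a < l A) →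
      M = TplusOmega P := by
  exact definite_least_model_char_general hP (Nat.strictMono_cast (α := Ordinal.{0}))

end LP
end

section
/- Let P be a propositional normal logic program with Fitting model M (the least fixed point of Φ_P). Then M is a model of P, P satisfies (F) with respect to M and some M-partial level mapping, and for every model I of P and every I-partial level mapping l such that P satisfies (F) with respect to I and l, one has I ⊆ M. That is, M is the greatest model among all models I for which there exists an I-partial level mapping l for P such that P satisfies (F) with respect to I and l. -/
namespace LP

variable {atom : Type}

/-!
A level mapping witnessing (F) for a consistent `I` is a rank under which every literal `L ∈ I` is
produced by `Φ_P` from literals of `I` of smaller rank. Well-founded induction on the rank puts any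
such `I` inside the least fixed point of `Φ_P`. Conversely, the stage at which a literal enters the
transfinite iteration of `Φ_P` ranks the literals of the least fixed point. That fixed point is
consistent, because its literals without a complement in it already form a prefixed point of `Φ_P`;
hence at most one literal over each atom occurs in it, and the rank descends to atoms.
-/

section RankedSets

open OrdinalApprox

universe u

variable {L : Type u}

/-- `I` is supported by `F` along the rank `r`: each element of `I` is produced by `F` from elements
of `I` of strictly smaller rank. For `F = Φ_P`, a consistent `I` and a rank that depends only on
the underlying atom, this is condition (F). -/
def SupportedAlong {β : Type*} [LT β] (F : Set L → Set L) (I : Set L) (r : L → β) : Prop :=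
  ∀ x ∈ I, x ∈ F {y ∈ I | r y < r x}

theorem SupportedAlong.subset_of_prefixed {β : Type*} [LT β] [WellFoundedLT β]
    {F : Set L → Set L} (hF : Monotone F) {I J : Set L} {r : L → β}
    (hI : SupportedAlong F I r) (hJ : F J ⊆ J) : I ⊆ J := by
  intro x
  induction x using (InvImage.wf r wellFounded_lt).induction with
  | h x ih =>
    intro hx
    have below_subset : {y ∈ I | r y < r x} ⊆ J := fun y hy => ih y hy.2 hy.1
    exact hJ (hF below_subset (hI x hx))

theorem mem_lfpApprox_bot {F : Set L →o Set L} {x : L} {α : Ordinal.{u}} :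
    x ∈ lfpApprox F ⊥ α ↔ ∃ β < α, x ∈ F (lfpApprox F ⊥ β) := by
  rw [lfpApprox]
  simp

theorem exists_supportedAlong_lfp (F : Set L →o Set L) :
    ∃ r : L → Ordinal.{u}, SupportedAlong F F.lfp r := by
  let r : L → Ordinal.{u} := fun x => sInf {α | x ∈ F (lfpApprox F ⊥ α)}
  refine ⟨r, fun x hx => ?_⟩
  obtain ⟨γ, hγ⟩ := lfp_mem_range_lfpApprox F
  have hxγ : x ∈ F (lfpApprox F ⊥ γ) := by rwa [hγ, F.map_lfp]
  have mem_at_rank : x ∈ F (lfpApprox F ⊥ (r x)) :=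
    csInf_mem (s := {α | x ∈ F (lfpApprox F ⊥ α)}) ⟨γ, hxγ⟩
  suffices stage_subset : lfpApprox F ⊥ (r x) ⊆ {y ∈ F.lfp | r y < r x} from
    F.monotone stage_subset mem_at_rank
  refine fun y hy => ⟨?_, ?_⟩
  · exact lfpApprox_le_of_mem_fixedPoints F F.map_lfp bot_le _ hy
  · obtain ⟨β, hβ, hyβ⟩ := mem_lfpApprox_bot.1 hy
    have hle : r y ≤ β := csInf_le' (s := {α | y ∈ F (lfpApprox F ⊥ α)}) hyβ
    exact hle.trans_lt hβ

end RankedSets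

/-- The complementary literal, exchanging `A` and `¬A`. -/
def Lit.compl : Lit atom → Lit atom
  | .pos a => .neg a
  | .neg a => .pos a

theorem Lit.compl_compl (L : Lit atom) : L.compl.compl = L := by
  cases L <;> rfl

theorem Consistent.exists_atom_level {I : Interp atom} (hI : Consistent I) {β : Type*}
    (r : Lit atom → β) : ∃ l : atom → β, ∀ L ∈ I, l L.atomOf = r L := by
  classical
  refine ⟨fun A => if Lit.pos A ∈ I then r (.pos A) else r (.neg A), ?_⟩
  rintro (A | A) hA
  · exact if_pos hA
  · exact if_neg fun hpos => hI A ⟨hpos, hA⟩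

section FittingOperator

variable {P : Program atom} {I J : Interp atom} {C : Clause atom} {A : atom}

theorem BodyTrue.mono (hIJ : I ⊆ J) (hC : BodyTrue I C) : BodyTrue J C :=
  ⟨fun a ha => hIJ (hC.1 a ha), fun b hb => hIJ (hC.2 b hb)⟩

theorem BodyFalse.mono (hIJ : I ⊆ J) (hC : BodyFalse I C) : BodyFalse J C :=
  hC.imp (fun ⟨a, ha, haI⟩ => ⟨a, ha, hIJ haI⟩) (fun ⟨b, hb, hbI⟩ => ⟨b, hb, hIJ hbI⟩)

theorem BodyTrue.exists_compl_mem_of_bodyFalse (hI : BodyTrue I C) (hJ : BodyFalse J C) :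
    ∃ L ∈ I, L.compl ∈ J := by
  obtain ⟨a, ha, haJ⟩ | ⟨b, hb, hbJ⟩ := hJ
  · exact ⟨.pos a, hI.1 a ha, haJ⟩
  · exact ⟨.neg b, hI.2 b hb, hbJ⟩

theorem pos_mem_phi : Lit.pos A ∈ Phi P I ↔ ∃ C ∈ P, C.head = A ∧ BodyTrue I C := by
  simp [Phi, posLits, negLits, TP]

theorem neg_mem_phi : Lit.neg A ∈ Phi P I ↔ ∀ C ∈ P, C.head = A → BodyFalse I C := by
  simp [Phi, posLits, negLits, FP]

theorem monotone_phi (P : Program atom) : Monotone (Phi P) := by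
  rintro I J hIJ (A | A) hA
  · obtain ⟨C, hC, hhead, hbody⟩ := pos_mem_phi.1 hA
    exact pos_mem_phi.2 ⟨C, hC, hhead, hbody.mono hIJ⟩
  · exact neg_mem_phi.2 fun C hC hhead => (neg_mem_phi.1 hA C hC hhead).mono hIJ

theorem exists_compl_mem_of_mem_phi {L : Lit atom} (hI : L ∈ Phi P I)
    (hJ : L.compl ∈ Phi P J) : ∃ K ∈ I, K.compl ∈ J := by
  cases L with
  | pos A =>
    obtain ⟨C, hC, hhead, htrue⟩ := pos_mem_phi.1 hI
    exact htrue.exists_compl_mem_of_bodyFalse (neg_mem_phi.1 hJ C hC hhead)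
  | neg A =>
    obtain ⟨C, hC, hhead, htrue⟩ := pos_mem_phi.1 hJ
    obtain ⟨K, hKJ, hKI⟩ :=
      htrue.exists_compl_mem_of_bodyFalse (neg_mem_phi.1 hI C hC hhead)
    exact ⟨K.compl, hKI, K.compl_compl.symm ▸ hKJ⟩

theorem Consistent.model3_of_phi_eq (hI : Consistent I) (hfix : Phi P I = I) : Model3 P I := by
  refine ⟨hI, fun C hC => ⟨fun htrue => ?_, fun hnot_false hneg => hnot_false ?_⟩⟩
  · exact hfix.subset (pos_mem_phi.2 ⟨C, hC, rfl, htrue⟩)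
  · exact neg_mem_phi.1 (hfix.superset hneg) C hC rfl

theorem Consistent.condF_iff_supportedAlong (hI : Consistent I) {l : atom → Ordinal.{0}} :
    CondF P I l ↔ SupportedAlong (Phi P) I (fun L => l L.atomOf) := by
  constructor
  · rintro hF (A | A) hA
    · obtain ⟨-, hsupport⟩ | ⟨hneg, -⟩ := hF A (.inl hA)
      · exact pos_mem_phi.2 hsupport
      · exact absurd ⟨hA, hneg⟩ (hI A)
    · obtain ⟨hpos, -⟩ | ⟨-, hsupport⟩ := hF A (.inr hA)
      · exact absurd ⟨hpos, hA⟩ (hI A)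
      · exact neg_mem_phi.2 hsupport
  · rintro hS A (hA | hA)
    · exact .inl ⟨hA, pos_mem_phi.1 (hS _ hA)⟩
    · exact .inr ⟨hA, neg_mem_phi.1 (hS _ hA)⟩

end FittingOperator

/-- Fitting's operator `Φ_P` bundled with its monotonicity, so that `OrderHom.lfp` applies. -/
def phiHom (P : Program atom) : Interp atom →o Interp atom := ⟨Phi P, monotone_phi P⟩

theorem fittingModel_eq_lfp (P : Program atom) : FittingModel P = (phiHom P).lfp := rfl

theorem phi_fittingModel (P : Program atom) : Phi P (FittingModel P) = FittingModel P :=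
  (phiHom P).map_lfp

theorem consistent_fittingModel (P : Program atom) : Consistent (FittingModel P) := by
  let M := FittingModel P
  have hfix : Phi P M = M := phi_fittingModel P
  let J : Interp atom := {L ∈ M | L.compl ∉ M}
  have hJ : Phi P J ⊆ J := by
    intro L hL
    refine ⟨hfix.subset (monotone_phi P (Set.sep_subset _ _) hL), fun hcompl => ?_⟩
    obtain ⟨K, hKJ, hKM⟩ := exists_compl_mem_of_mem_phi hL (hfix.superset hcompl)
    exact hKJ.2 hKM
  have hMJ : M ⊆ J := (phiHom P).lfp_le hJ
  exact fun A ⟨hpos, hneg⟩ => (hMJ hpos).2 hneg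

theorem exists_condF_fittingModel (P : Program atom) :
    ∃ l : atom → Ordinal.{0}, CondF P (FittingModel P) l := by
  have hcons := consistent_fittingModel P
  obtain ⟨r, hr⟩ := exists_supportedAlong_lfp (phiHom P)
  rw [← fittingModel_eq_lfp] at hr
  obtain ⟨l, hl⟩ := hcons.exists_atom_level r
  refine ⟨l, hcons.condF_iff_supportedAlong.2 fun L hL => ?_⟩
  have below_subset : {K ∈ FittingModel P | r K < r L} ⊆
      {K ∈ FittingModel P | l K.atomOf < l L.atomOf} :=
    fun K ⟨hK, hlt⟩ => ⟨hK, by rwa [hl K hK, hl L hL]⟩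
  exact monotone_phi P below_subset (hr L hL)

theorem CondF.subset_fittingModel {P : Program atom} {I : Interp atom} {l : atom → Ordinal.{0}}
    (hF : CondF P I l) (hI : Consistent I) : I ⊆ FittingModel P :=
  (hI.condF_iff_supportedAlong.1 hF).subset_of_prefixed (monotone_phi P)
    (phi_fittingModel P).subset

theorem fitting_model_char_general (P : Program atom) :
    Model3 P (FittingModel P) ∧
    (∃ l : atom → Ordinal.{0}, CondF P (FittingModel P) l) ∧
    ∀ (I : Interp atom) (l : atom → Ordinal.{0}),
      Consistent I → CondF P I l → I ⊆ FittingModel P :=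
  ⟨(consistent_fittingModel P).model3_of_phi_eq (phi_fittingModel P),
    exists_condF_fittingModel P,
    fun _ _ hI hF => hF.subset_fittingModel hI⟩

/-- the Fitting model is the greatest model `I` admitting an
`I`-partial level mapping `l` such that `P` satisfies (F) w.r.t. `I` and `l`. -/
theorem fitting_model_char {atom : Type} [Countable atom] (P : Program atom) :
    Model3 P (FittingModel P) ∧
    (∃ l : atom → Ordinal.{0}, CondF P (FittingModel P) l) ∧
    ∀ (I : Interp atom) (l : atom → Ordinal.{0}),
      Model3 P I → CondF P I l → I ⊆ FittingModel P := by
  obtain ⟨hmodel, hlevel, hgreatest⟩ := fitting_model_char_general P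
  exact ⟨hmodel, hlevel, fun I l hI hF => hgreatest I l hI.1 hF⟩

end LP
end
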